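/- Let μ : (0, ∞) → ℝ be twice differentiable. For the conformally flat-type diagonal metric ḡ = e^{μ(ρ)}·diag(1, ρ², ρ² sin²θ, 1) in coordinates (ρ,θ,φ,τ) on ρ > 0, 0 < θ < π, the covariant Riemann–Christoffel curvature components satisfy: R̄_{1212} = −½ ρ e^{μ}(μ′ + ρμ″); R̄_{1313} = −½ ρ e^{μ} sin²θ (μ′ + ρμ″); R̄_{2323} = −ρ³ e^{μ} μ′ sin²θ (1 + ¼ρμ′); R̄_{1414} = −½ e^{μ} μ″; R̄_{2424} = −½ ρ e^{μ} μ′ (1 + ½ρμ′). -/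

import Mathlib

/-!
For a diagonal metric with entries `f₀, …, f₃`, the symbols `Γ_{αβ,γ}` vanish unless two indices
agree, so `R_{αβαβ}` is an explicit expression in `∂_α² f_β`, `∂_β² f_α` and products of first
derivatives. It collapses further when `f_α` is a function of a single coordinate, which holds for
`α = ρ` and `α = θ` in the metric `ḡ`: `f_ρ` and `f_θ` depend on `ρ` only. As every entry of `ḡ` has
the form `e^{μ(ρ)} ρ^m sin^n θ`, the remaining derivatives are one-variable ones.
-/

noncomputable section

/-- Partial derivative of a scalar function on `ℝ⁴` in the `i`-th coordinate direction. -/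
def pd (f : (Fin 4 → ℝ) → ℝ) (i : Fin 4) (x : Fin 4 → ℝ) : ℝ :=
  fderiv ℝ f x (Pi.single i 1)

/-- Christoffel symbols of the first kind,
`Γ_{αβ,γ} = ½ (∂_{q^α} g_{βγ} + ∂_{q^β} g_{αγ} - ∂_{q^γ} g_{αβ})`. -/
def Γ1 (g : (Fin 4 → ℝ) → Matrix (Fin 4) (Fin 4) ℝ) (α β γ : Fin 4) (x : Fin 4 → ℝ) : ℝ :=
  (1 / 2) * (pd (fun y => g y β γ) α x + pd (fun y => g y α γ) β x - pd (fun y => g y α β) γ x)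

/-- Covariant Riemann–Christoffel curvature components
`R_{αβδγ} = ∂_{q^δ} Γ_{βγ,α} - ∂_{q^γ} Γ_{βδ,α} + Σ_{λσ} g^{λσ} (Γ_{βδ,λ} Γ_{αγ,σ} - Γ_{βγ,λ} Γ_{αδ,σ})`. -/
def Rcov (g : (Fin 4 → ℝ) → Matrix (Fin 4) (Fin 4) ℝ) (α β δ γ : Fin 4) (x : Fin 4 → ℝ) : ℝ :=
  pd (Γ1 g β γ α) δ x - pd (Γ1 g β δ α) γ x +
    ∑ lam, ∑ sig, (g x)⁻¹ lam sig *
      (Γ1 g β δ lam x * Γ1 g α γ sig x - Γ1 g β γ lam x * Γ1 g α δ sig x)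

/-- The conformally flat-type diagonal metric
`ḡ = e^{μ(ρ)} · diag (1, ρ², ρ² sin² θ, 1)` in coordinates `(ρ, θ, φ, τ) = (x 0, x 1, x 2, x 3)`. -/
def gConf (μ : ℝ → ℝ) (x : Fin 4 → ℝ) : Matrix (Fin 4) (Fin 4) ℝ :=
  Real.exp (μ (x 0)) •
    Matrix.diagonal ![(1 : ℝ), (x 0) ^ 2, (x 0) ^ 2 * Real.sin (x 1) ^ 2, 1]

open Filter Topology Matrix

section PartialDerivatives

variable {f g : (Fin 4 → ℝ) → ℝ} {x : Fin 4 → ℝ} {i j k : Fin 4}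

theorem pd_congr (h : f =ᶠ[𝓝 x] g) : pd f i x = pd g i x := by
  rw [pd, pd, h.fderiv_eq]

theorem pd_zero : pd (fun _ => 0) i x = 0 := by
  simp [pd]

theorem pd_const_mul (c : ℝ) : pd (fun y => c * f y) i x = c * pd f i x := by
  simp [pd, ← smul_eq_mul, ← Pi.smul_def, fderiv_const_smul_field]

theorem pd_eq_deriv_update (hf : DifferentiableAt ℝ f x) :
    pd f i x = deriv (fun t => f (Function.update x i t)) (x i) := by
  have hf' : HasFDerivAt f (fderiv ℝ f x) (Function.update x i (x i)) := by
    simpa using hf.hasFDerivAt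
  exact (hf'.comp_hasDerivAt (x i) (hasDerivAt_update x i (x i))).deriv.symm

theorem pd_eq_zero_of_dependsOn {s : Set (Fin 4)} (hf : DependsOn f s) (hi : i ∉ s) :
    pd f i = fun _ => 0 := by
  funext x
  by_cases hx : DifferentiableAt ℝ f x
  · have hupdate (t : ℝ) : f (Function.update x i t) = f x :=
      hf fun j hj => Function.update_of_ne (ne_of_mem_of_not_mem hj hi) t x
    simp [pd_eq_deriv_update hx, hupdate]
  · simp [pd, fderiv_zero_of_not_differentiableAt hx]

variable {a b : ℝ → ℝ}

theorem pd_separable (hjk : j ≠ k) (ha : DifferentiableAt ℝ a (x j))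
    (hb : DifferentiableAt ℝ b (x k)) :
    pd (fun y => a (y j) * b (y k)) j x = deriv a (x j) * b (x k) := by
  have hab : DifferentiableAt ℝ (fun y : Fin 4 → ℝ => a (y j) * b (y k)) x :=
    (ha.comp x (differentiableAt_apply j x)).mul (hb.comp x (differentiableAt_apply k x))
  simp [pd_eq_deriv_update hab, hjk.symm]

theorem pd_pd_separable (hjk : j ≠ k) (ha : ∀ᶠ r in 𝓝 (x j), DifferentiableAt ℝ a r)
    (ha' : DifferentiableAt ℝ (deriv a) (x j)) (hb : ∀ᶠ t in 𝓝 (x k), DifferentiableAt ℝ b t) :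
    pd (pd (fun y => a (y j) * b (y k)) j) j x = deriv (deriv a) (x j) * b (x k) := by
  have hpd : pd (fun y => a (y j) * b (y k)) j =ᶠ[𝓝 x] fun y => deriv a (y j) * b (y k) := by
    filter_upwards [(continuous_apply j).continuousAt.eventually ha,
      (continuous_apply k).continuousAt.eventually hb] with y hay hby
    exact pd_separable hjk hay hby
  rw [pd_congr hpd, pd_separable hjk ha' hb.self_of_nhds]

end PartialDerivatives

section DiagonalMetric

/-- The diagonal metric on `ℝ⁴` with coefficient functions `f 0, …, f 3`. -/
def diagonalMetric (f : Fin 4 → (Fin 4 → ℝ) → ℝ) (x : Fin 4 → ℝ) : Matrix (Fin 4) (Fin 4) ℝ :=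
  diagonal fun i => f i x

variable {f : Fin 4 → (Fin 4 → ℝ) → ℝ} {x : Fin 4 → ℝ} {α β : Fin 4}

theorem diagonalMetric_inv (hf : ∀ i, f i x ≠ 0) :
    (diagonalMetric f x)⁻¹ = diagonal fun i => (f i x)⁻¹ :=
  inv_eq_right_inv <| by simp [diagonalMetric, diagonal_mul_diagonal, hf]

theorem pd_diagonalMetric (i j k : Fin 4) :
    pd (fun y => diagonalMetric f y i j) k x = if i = j then pd (f i) k x else 0 := by
  split_ifs with hij
  · simp [diagonalMetric, hij]
  · simp [diagonalMetric, diagonal_apply_ne _ hij, pd_zero]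

theorem Γ1_diagonalMetric_self (k : Fin 4) :
    Γ1 (diagonalMetric f) β β k x =
      (if β = k then pd (f β) β x else 0) - (1 / 2) * pd (f β) k x := by
  simp only [Γ1, pd_diagonalMetric, if_true]
  ring

theorem Γ1_diagonalMetric_of_ne (hαβ : α ≠ β) (k : Fin 4) :
    Γ1 (diagonalMetric f) α β k x =
      (1 / 2) * ((if β = k then pd (f β) α x else 0) + if α = k then pd (f α) β x else 0) := by
  simp only [Γ1, pd_diagonalMetric, if_neg hαβ, sub_zero]

theorem Γ1_mul_sub_mul_diagonalMetric (hαβ : α ≠ β) (k : Fin 4) :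
    Γ1 (diagonalMetric f) β α k x * Γ1 (diagonalMetric f) α β k x -
        Γ1 (diagonalMetric f) β β k x * Γ1 (diagonalMetric f) α α k x =
      (if α = k then (1 / 4) * pd (f α) β x ^ 2 + (1 / 2) * (pd (f α) α x * pd (f β) α x) else 0) +
        (if β = k then (1 / 4) * pd (f β) α x ^ 2 + (1 / 2) * (pd (f α) β x * pd (f β) β x)
          else 0) -
        (1 / 4) * (pd (f α) k x * pd (f β) k x) := by
  rw [Γ1_diagonalMetric_of_ne hαβ, Γ1_diagonalMetric_of_ne hαβ.symm, Γ1_diagonalMetric_self,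
    Γ1_diagonalMetric_self]
  split_ifs with hβk hαk hαk
  · exact absurd (hβk.trans hαk.symm) hαβ
  · subst hβk
    ring
  · subst hαk
    ring
  · ring

theorem Rcov_diagonalMetric (hf : ∀ i, f i x ≠ 0) (hαβ : α ≠ β) :
    Rcov (diagonalMetric f) α β α β x =
      -(1 / 2) * (pd (pd (f β) α) α x + pd (pd (f α) β) β x) +
        (f α x)⁻¹ * ((1 / 4) * pd (f α) β x ^ 2 + (1 / 2) * (pd (f α) α x * pd (f β) α x)) +
        (f β x)⁻¹ * ((1 / 4) * pd (f β) α x ^ 2 + (1 / 2) * (pd (f α) β x * pd (f β) β x)) -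
        (1 / 4) * ∑ k, (f k x)⁻¹ * (pd (f α) k x * pd (f β) k x) := by
  have hββα : Γ1 (diagonalMetric f) β β α = fun y => -(1 / 2) * pd (f β) α y := by
    funext y
    simp [Γ1_diagonalMetric_self, hαβ.symm]
  have hβαα : Γ1 (diagonalMetric f) β α α = fun y => (1 / 2) * pd (f α) β y := by
    funext y
    simp [Γ1_diagonalMetric_of_ne hαβ.symm, hαβ.symm]
  simp only [Rcov, hββα, hβαα, pd_const_mul, diagonalMetric_inv hf, diagonal_apply, ite_mul,
    zero_mul, Finset.sum_ite_eq, Finset.mem_univ, if_true, Γ1_mul_sub_mul_diagonalMetric hαβ]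
  simp only [mul_sub, mul_add (_⁻¹), mul_ite, mul_zero, Finset.sum_sub_distrib,
    Finset.sum_add_distrib, Finset.sum_ite_eq, Finset.mem_univ, if_true, Finset.mul_sum,
    mul_left_comm (_⁻¹)]
  ring

theorem Rcov_diagonalMetric_of_dependsOn_self (hf : ∀ i, f i x ≠ 0) (hαβ : α ≠ β)
    (hα : DependsOn (f α) {α}) :
    Rcov (diagonalMetric f) α β α β x =
      -(1 / 2) * pd (pd (f β) α) α x +
        (1 / 4) * pd (f β) α x * (pd (f α) α x / f α x + pd (f β) α x / f β x) := by
  have hpd {k : Fin 4} (hk : k ≠ α) : pd (f α) k = fun _ => 0 := pd_eq_zero_of_dependsOn hα hk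
  have hsum : ∑ k, (f k x)⁻¹ * (pd (f α) k x * pd (f β) k x) =
      (f α x)⁻¹ * (pd (f α) α x * pd (f β) α x) :=
    Fintype.sum_eq_single α fun k hk => by simp [hpd hk]
  rw [Rcov_diagonalMetric hf hαβ, hsum, hpd hαβ.symm, pd_zero]
  ring

theorem Rcov_diagonalMetric_of_dependsOn_other {δ : Fin 4} (hf : ∀ i, f i x ≠ 0) (hαβ : α ≠ β)
    (hα : DependsOn (f α) {δ}) (hαδ : α ≠ δ) (hβδ : β ≠ δ) :
    Rcov (diagonalMetric f) α β α β x =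
      -(1 / 2) * pd (pd (f β) α) α x +
        (1 / 4) * (pd (f β) α x ^ 2 / f β x - pd (f α) δ x * pd (f β) δ x / f δ x) := by
  have hpd {k : Fin 4} (hk : k ≠ δ) : pd (f α) k = fun _ => 0 := pd_eq_zero_of_dependsOn hα hk
  have hsum : ∑ k, (f k x)⁻¹ * (pd (f α) k x * pd (f β) k x) =
      (f δ x)⁻¹ * (pd (f α) δ x * pd (f β) δ x) :=
    Fintype.sum_eq_single δ fun k hk => by simp [hpd hk]
  rw [Rcov_diagonalMetric hf hαβ, hsum, hpd hαδ, hpd hβδ, pd_zero]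
  ring

end DiagonalMetric

section OneVariable

variable {μ u : ℝ → ℝ} {r : ℝ}

theorem deriv_exp_mul (hμ : DifferentiableAt ℝ μ r) (hu : DifferentiableAt ℝ u r) :
    deriv (fun s => Real.exp (μ s) * u s) r =
      Real.exp (μ r) * (deriv μ r * u r + deriv u r) := by
  rw [deriv_fun_mul hμ.exp hu, deriv_exp hμ]
  ring

theorem hasDerivAt_deriv_exp_mul (hμ : ∀ᶠ s in 𝓝 r, DifferentiableAt ℝ μ s)
    (hμ' : DifferentiableAt ℝ (deriv μ) r) (hu : ∀ᶠ s in 𝓝 r, DifferentiableAt ℝ u s)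
    (hu' : DifferentiableAt ℝ (deriv u) r) :
    HasDerivAt (deriv fun s => Real.exp (μ s) * u s)
      (Real.exp (μ r) * ((deriv μ r ^ 2 + deriv (deriv μ) r) * u r + 2 * deriv μ r * deriv u r +
        deriv (deriv u) r)) r := by
  have hderiv : deriv (fun s => Real.exp (μ s) * u s) =ᶠ[𝓝 r]
      fun s => Real.exp (μ s) * (deriv μ s * u s + deriv u s) := by
    filter_upwards [hμ, hu] with s hμs hus using deriv_exp_mul hμs hus
  have hμr := hμ.self_of_nhds.hasDerivAt
  have hur := hu.self_of_nhds.hasDerivAt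
  refine HasDerivAt.congr_of_eventuallyEq ?_ hderiv
  refine (hμr.exp.mul ((hμ'.hasDerivAt.mul hur).add hu'.hasDerivAt)).congr_deriv ?_
  simp only [Pi.add_apply, Pi.mul_apply]
  ring

-- Here and below, wherever an exponent `n - 1` or `n - 2` truncates, its coefficient vanishes.
theorem deriv_sin_pow (n : ℕ) :
    deriv (fun t => Real.sin t ^ n) = fun t => n * Real.sin t ^ (n - 1) * Real.cos t := by
  funext t
  simp

theorem hasDerivAt_deriv_sin_pow (n : ℕ) (t : ℝ) :
    HasDerivAt (deriv fun s => Real.sin s ^ n)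
      (n * (n - 1 : ℕ) * Real.sin t ^ (n - 2) * Real.cos t ^ 2 -
        n * Real.sin t ^ (n - 1) * Real.sin t) t := by
  rw [deriv_sin_pow]
  refine ((((Real.hasDerivAt_sin t).pow (n - 1)).const_mul (n : ℝ)).mul
    (Real.hasDerivAt_cos t)).congr_deriv ?_
  simp only [Pi.pow_apply, Nat.sub_sub]
  ring

end OneVariable

section ExpPowSin

/-- The function `e^{μ(ρ)} ρ^m sin^n θ` of the coordinates `(ρ, θ, φ, τ)`; every diagonal entry of
the metric `gConf μ` has this form. -/
def expPowSin (μ : ℝ → ℝ) (m n : ℕ) (x : Fin 4 → ℝ) : ℝ :=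
  Real.exp (μ (x 0)) * x 0 ^ m * Real.sin (x 1) ^ n

variable {μ : ℝ → ℝ} {m n : ℕ} {x : Fin 4 → ℝ}

theorem expPowSin_eq_sin_pow_mul (μ : ℝ → ℝ) (m n : ℕ) :
    expPowSin μ m n = fun x => Real.sin (x 1) ^ n * (Real.exp (μ (x 0)) * x 0 ^ m) :=
  funext fun _ => mul_comm _ _

theorem dependsOn_expPowSin_zero (μ : ℝ → ℝ) (m : ℕ) : DependsOn (expPowSin μ m 0) {0} :=
  fun x y h => by simp [expPowSin, h 0 rfl]

theorem expPowSin_ne_zero (hρ : x 0 ≠ 0) (hθ : Real.sin (x 1) ≠ 0) : expPowSin μ m n x ≠ 0 :=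
  mul_ne_zero (mul_ne_zero (Real.exp_ne_zero _) (pow_ne_zero m hρ)) (pow_ne_zero n hθ)

theorem pd_expPowSin_zero (hμ : DifferentiableAt ℝ μ (x 0)) :
    pd (expPowSin μ m n) 0 x =
      Real.exp (μ (x 0)) * (deriv μ (x 0) * x 0 ^ m + m * x 0 ^ (m - 1)) * Real.sin (x 1) ^ n := by
  have hradial : DifferentiableAt ℝ (fun r => Real.exp (μ r) * r ^ m) (x 0) := by fun_prop
  have hpolar : DifferentiableAt ℝ (fun t => Real.sin t ^ n) (x 1) := by fun_prop
  refine (pd_separable (by decide) hradial hpolar).trans ?_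
  rw [deriv_exp_mul hμ (by fun_prop), deriv_pow_field]

theorem pd_expPowSin_one (hμ : DifferentiableAt ℝ μ (x 0)) :
    pd (expPowSin μ m n) 1 x =
      Real.exp (μ (x 0)) * x 0 ^ m * (n * Real.sin (x 1) ^ (n - 1) * Real.cos (x 1)) := by
  have hradial : DifferentiableAt ℝ (fun r => Real.exp (μ r) * r ^ m) (x 0) := by fun_prop
  have hpolar : DifferentiableAt ℝ (fun t => Real.sin t ^ n) (x 1) := by fun_prop
  rw [expPowSin_eq_sin_pow_mul, pd_separable (by decide) hpolar hradial, deriv_sin_pow, mul_comm]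

theorem pd_pd_expPowSin_zero (hμ : ∀ᶠ r in 𝓝 (x 0), DifferentiableAt ℝ μ r)
    (hμ' : DifferentiableAt ℝ (deriv μ) (x 0)) :
    pd (pd (expPowSin μ m n) 0) 0 x =
      Real.exp (μ (x 0)) * ((deriv μ (x 0) ^ 2 + deriv (deriv μ) (x 0)) * x 0 ^ m +
        2 * deriv μ (x 0) * (m * x 0 ^ (m - 1)) + m * (m - 1 : ℕ) * x 0 ^ (m - 2)) *
        Real.sin (x 1) ^ n := by
  have hradial : ∀ᶠ r in 𝓝 (x 0), DifferentiableAt ℝ (fun s => Real.exp (μ s) * s ^ m) r := by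
    filter_upwards [hμ] with r hr
    fun_prop
  have hpow : deriv (fun s : ℝ => s ^ m) = fun s => (m : ℝ) * s ^ (m - 1) := by
    funext s
    simp
  have hradial' := hasDerivAt_deriv_exp_mul hμ hμ' (u := fun s => s ^ m)
    (.of_forall fun s => by fun_prop) (by rw [hpow]; fun_prop)
  have hpolar : ∀ᶠ t in 𝓝 (x 1), DifferentiableAt ℝ (fun s => Real.sin s ^ n) t :=
    .of_forall fun t => by fun_prop
  refine (pd_pd_separable (by decide) hradial hradial'.differentiableAt hpolar).trans ?_
  rw [hradial'.deriv, hpow]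
  simp [Nat.sub_sub, mul_assoc]

theorem pd_pd_expPowSin_one (hμ : ∀ᶠ r in 𝓝 (x 0), DifferentiableAt ℝ μ r) :
    pd (pd (expPowSin μ m n) 1) 1 x =
      Real.exp (μ (x 0)) * x 0 ^ m * (n * (n - 1 : ℕ) * Real.sin (x 1) ^ (n - 2) *
        Real.cos (x 1) ^ 2 - n * Real.sin (x 1) ^ (n - 1) * Real.sin (x 1)) := by
  have hradial : ∀ᶠ r in 𝓝 (x 0), DifferentiableAt ℝ (fun r => Real.exp (μ r) * r ^ m) r := by
    filter_upwards [hμ] with r hr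
    fun_prop
  have hpolar : ∀ᶠ t in 𝓝 (x 1), DifferentiableAt ℝ (fun t => Real.sin t ^ n) t :=
    .of_forall fun t => by fun_prop
  have hpolar' := hasDerivAt_deriv_sin_pow n (x 1)
  rw [expPowSin_eq_sin_pow_mul,
    pd_pd_separable (by decide) hpolar hpolar'.differentiableAt hradial, hpolar'.deriv, mul_comm]

end ExpPowSin

section ConformalMetric

/-- The diagonal entries of the metric `gConf μ`. -/
def gConfCoeff (μ : ℝ → ℝ) : Fin 4 → (Fin 4 → ℝ) → ℝ :=
  ![expPowSin μ 0 0, expPowSin μ 2 0, expPowSin μ 2 2, expPowSin μ 0 0]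

theorem gConf_eq_diagonalMetric (μ : ℝ → ℝ) : gConf μ = diagonalMetric (gConfCoeff μ) := by
  funext x
  rw [gConf, diagonalMetric, ← diagonal_smul]
  congr 1
  funext i
  fin_cases i <;> simp [gConfCoeff, expPowSin, mul_assoc]

variable {μ : ℝ → ℝ} {x : Fin 4 → ℝ}

theorem gConfCoeff_ne_zero (hρ : x 0 ≠ 0) (hθ : Real.sin (x 1) ≠ 0) (i : Fin 4) :
    gConfCoeff μ i x ≠ 0 := by
  fin_cases i <;> exact expPowSin_ne_zero hρ hθ

theorem Rcov_gConf_radial {i : Fin 4} (hρ : x 0 ≠ 0) (hθ : Real.sin (x 1) ≠ 0) (hi : 0 ≠ i) :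
    Rcov (gConf μ) 0 i 0 i x =
      -(1 / 2) * pd (pd (gConfCoeff μ i) 0) 0 x +
        (1 / 4) * pd (gConfCoeff μ i) 0 x *
          (pd (gConfCoeff μ 0) 0 x / gConfCoeff μ 0 x +
            pd (gConfCoeff μ i) 0 x / gConfCoeff μ i x) := by
  rw [gConf_eq_diagonalMetric]
  exact Rcov_diagonalMetric_of_dependsOn_self (gConfCoeff_ne_zero hρ hθ) hi
    (dependsOn_expPowSin_zero μ 0)

theorem Rcov_gConf_polar {i : Fin 4} (hρ : x 0 ≠ 0) (hθ : Real.sin (x 1) ≠ 0) (hi₀ : i ≠ 0)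
    (hi₁ : 1 ≠ i) :
    Rcov (gConf μ) 1 i 1 i x =
      -(1 / 2) * pd (pd (gConfCoeff μ i) 1) 1 x +
        (1 / 4) * (pd (gConfCoeff μ i) 1 x ^ 2 / gConfCoeff μ i x -
          pd (gConfCoeff μ 1) 0 x * pd (gConfCoeff μ i) 0 x / gConfCoeff μ 0 x) := by
  rw [gConf_eq_diagonalMetric]
  exact Rcov_diagonalMetric_of_dependsOn_other (gConfCoeff_ne_zero hρ hθ) hi₁
    (dependsOn_expPowSin_zero μ 2) (by decide) hi₀

end ConformalMetric

/-- for the metric `ḡ = e^{μ(ρ)} · diag (1, ρ², ρ² sin² θ, 1)` on `ρ > 0`,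
`0 < θ < π` with `μ` twice differentiable, the covariant Riemann–Christoffel curvature
components satisfy `R̄₁₂₁₂ = -½ ρ e^μ (μ' + ρ μ'')`, `R̄₁₃₁₃ = -½ ρ e^μ sin² θ (μ' + ρ μ'')`,
`R̄₂₃₂₃ = -ρ³ e^μ μ' sin² θ (1 + ¼ ρ μ')`, `R̄₁₄₁₄ = -½ e^μ μ''`,
`R̄₂₄₂₄ = -½ ρ e^μ μ' (1 + ½ ρ μ')`.  (Indices here are 0-based.) -/
theorem riemann_components_conformal (μ : ℝ → ℝ)
    (hμ : DifferentiableOn ℝ μ (Set.Ioi 0))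
    (hμ' : DifferentiableOn ℝ (deriv μ) (Set.Ioi 0)) :
    ∀ x : Fin 4 → ℝ, 0 < x 0 → 0 < x 1 → x 1 < Real.pi →
      Rcov (gConf μ) 0 1 0 1 x =
        -((1 / 2) * (x 0) * Real.exp (μ (x 0)) *
          (deriv μ (x 0) + (x 0) * deriv (deriv μ) (x 0))) ∧
      Rcov (gConf μ) 0 2 0 2 x =
        -((1 / 2) * (x 0) * Real.exp (μ (x 0)) * Real.sin (x 1) ^ 2 *
          (deriv μ (x 0) + (x 0) * deriv (deriv μ) (x 0))) ∧
      Rcov (gConf μ) 1 2 1 2 x =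
        -((x 0) ^ 3 * Real.exp (μ (x 0)) * deriv μ (x 0) * Real.sin (x 1) ^ 2 *
          (1 + (1 / 4) * (x 0) * deriv μ (x 0))) ∧
      Rcov (gConf μ) 0 3 0 3 x =
        -((1 / 2) * Real.exp (μ (x 0)) * deriv (deriv μ) (x 0)) ∧
      Rcov (gConf μ) 1 3 1 3 x =
        -((1 / 2) * (x 0) * Real.exp (μ (x 0)) * deriv μ (x 0) *
          (1 + (1 / 2) * (x 0) * deriv μ (x 0))) := by
  intro x hρ hθ hθπ
  have hρ₀ : x 0 ≠ 0 := hρ.ne'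
  have hsin : Real.sin (x 1) ≠ 0 := (Real.sin_pos_of_pos_of_lt_pi hθ hθπ).ne'
  have hμx : ∀ᶠ r in 𝓝 (x 0), DifferentiableAt ℝ μ r :=
    hμ.eventually_differentiableAt (Ioi_mem_nhds hρ)
  have hμ'x : DifferentiableAt ℝ (deriv μ) (x 0) := hμ'.differentiableAt (Ioi_mem_nhds hρ)
  refine ⟨(Rcov_gConf_radial hρ₀ hsin (by decide)).trans ?_,
    (Rcov_gConf_radial hρ₀ hsin (by decide)).trans ?_,
    (Rcov_gConf_polar hρ₀ hsin (by decide) (by decide)).trans ?_,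
    (Rcov_gConf_radial hρ₀ hsin (by decide)).trans ?_,
    (Rcov_gConf_polar hρ₀ hsin (by decide) (by decide)).trans ?_⟩
  all_goals
    simp only [gConfCoeff, cons_val, pd_expPowSin_zero hμx.self_of_nhds,
      pd_expPowSin_one hμx.self_of_nhds, pd_pd_expPowSin_zero hμx hμ'x, pd_pd_expPowSin_one hμx,
      expPowSin, Nat.cast_zero, Nat.cast_one, Nat.cast_ofNat, Nat.reduceSub, pow_zero]
    field_simp
    ring

end
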